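/- For all nonnegative integers n and k and every nonzero complex number λ, the following identity holds: y₂(n,k;−λ) = (k!/(2k)!) · ∑_{j=0}^{k} ∑_{d=0}^{n} (−1)^{k+n−d} C(n,d) · S₂(d,j;λ) · S₂(n−d,k−j;λ^{−1}). -/

import Mathlib

/-!
The identity is an identity between coefficients of exponential generating functions. Put
`a = λ e^t - 1` and `b = λ⁻¹ e^{-t} - 1`. Then `j! ∑ S₂(n,j;λ) t^n/n! = a^j`, and substituting
`-t` for `t` turns the generating function of `S₂(·,j;λ⁻¹)` into `b^j / j!`. Since
`-λ e^t - λ⁻¹ e^{-t} + 2 = -(a + b)`, the generating function of `y₂(·,k;-λ)` is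
`(-1)^k (a + b)^k / (2k)!`, and the binomial theorem
`(a + b)^k / k! = ∑_j (a^j / j!) (b^{k-j} / (k-j)!)` gives the convolution. All of this takes place
in the ring of formal power series over `ℂ`; the generating functions are `coeff_stirling2`,
`coeff_stirling2_neg` and `coeff_y2`.
-/

open Finset

/-- The λ-Stirling numbers of the second kind
`S₂(n,k;λ) = (1/k!) ∑_{j=0}^{k} (−1)^{k−j} C(k,j) λ^j j^n`. -/
noncomputable def stirling2 (n k : ℕ) (lam : ℂ) : ℂ :=
  (1 / (k.factorial : ℂ)) *
    ∑ j ∈ range (k + 1), (-1 : ℂ) ^ (k - j) * (k.choose j : ℂ) * lam ^ j * (j : ℂ) ^ n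

/-- The numbers `y₂(n,k;λ) = (1/(2k)!) ∑_{j=0}^{2k} C(2k,j) λ^{j−k} (j−k)^n`. -/
noncomputable def y2 (n k : ℕ) (lam : ℂ) : ℂ :=
  (1 / ((2 * k).factorial : ℂ)) *
    ∑ j ∈ range (2 * k + 1),
      ((2 * k).choose j : ℂ) * lam ^ ((j : ℤ) - k) * ((j : ℂ) - k) ^ n

/-- The formal power series `e^{ct} = ∑ c^n t^n / n!`. -/
noncomputable def expSeries (c : ℂ) : PowerSeries ℂ :=
  PowerSeries.rescale c (PowerSeries.exp ℂ)

lemma expSeries_mul (a b : ℂ) : expSeries a * expSeries b = expSeries (a + b) :=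
  PowerSeries.exp_mul_exp_eq_exp_add a b

lemma expSeries_zero : expSeries 0 = 1 := by
  simp [expSeries, PowerSeries.rescale_zero]

lemma expSeries_pow (c : ℂ) (j : ℕ) : expSeries c ^ j = expSeries (j * c) := by
  induction j with
  | zero => simp [expSeries_zero]
  | succ j ih =>
    rw [pow_succ, ih, expSeries_mul]
    push_cast
    ring_nf

lemma coeff_C_mul_expSeries (n : ℕ) (r c : ℂ) :
    PowerSeries.coeff (R := ℂ) n (PowerSeries.C r * expSeries c) = r * c ^ n / n.factorial := by
  simp [expSeries, PowerSeries.coeff_rescale, PowerSeries.coeff_exp]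
  ring

/-- The generating function `(λ e^t - 1)^k = k! ∑ S₂(n,k;λ) t^n / n!`. -/
lemma coeff_stirling2 (n k : ℕ) (lam : ℂ) :
    PowerSeries.coeff (R := ℂ) n ((PowerSeries.C lam * expSeries 1 - 1) ^ k) =
      k.factorial * stirling2 n k lam / n.factorial := by
  have hterm : ∀ j, (PowerSeries.C lam * expSeries 1) ^ j * (-1) ^ (k - j) * (k.choose j : PowerSeries ℂ)
      = PowerSeries.C ((-1 : ℂ) ^ (k - j) * (k.choose j : ℂ) * lam ^ j) * expSeries j := by
    intro j
    simp only [mul_pow, expSeries_pow, map_mul, map_pow, map_neg, map_one, map_natCast, mul_one]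
    ring
  rw [sub_eq_add_neg, add_pow, map_sum]
  simp only [hterm, coeff_C_mul_expSeries]
  have hk : (k.factorial : ℂ) ≠ 0 := by exact_mod_cast k.factorial_ne_zero
  rw [stirling2, ← mul_assoc, mul_one_div_cancel hk, one_mul, sum_div]

/-- The generating function of `coeff_stirling2` with `-t` substituted for `t`. -/
lemma coeff_stirling2_neg (n k : ℕ) (lam : ℂ) :
    PowerSeries.coeff (R := ℂ) n ((PowerSeries.C lam * expSeries (-1) - 1) ^ k) =
      (-1) ^ n * (k.factorial * stirling2 n k lam / n.factorial) := by
  have hC : PowerSeries.rescale (-1) (PowerSeries.C lam) = PowerSeries.C lam := by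
    ext m
    rw [PowerSeries.coeff_rescale, PowerSeries.coeff_C]
    split_ifs with hm <;> simp [hm]
  have h : (PowerSeries.C lam * expSeries (-1) - 1) ^ k =
      PowerSeries.rescale (-1) ((PowerSeries.C lam * expSeries 1 - 1) ^ k) := by
    simp [expSeries, hC]
  rw [h, PowerSeries.coeff_rescale, coeff_stirling2]

/-- The generating function `(μ e^t + μ⁻¹ e^{-t} + 2)^k = (2k)! ∑ y₂(n,k;μ) t^n / n!`. -/
lemma coeff_y2 (n k : ℕ) (mu : ℂ) (hmu : mu ≠ 0) :
    PowerSeries.coeff (R := ℂ) n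
        ((PowerSeries.C mu * expSeries 1 + PowerSeries.C mu⁻¹ * expSeries (-1) + 2) ^ k) =
      (2 * k).factorial * y2 n k mu / n.factorial := by
  have hC : PowerSeries.C mu * PowerSeries.C mu⁻¹ = 1 := by
    rw [← map_mul, mul_inv_cancel₀ hmu, map_one]
  have hE : expSeries 1 * expSeries (-1) = 1 := by
    rw [expSeries_mul, add_neg_cancel, expSeries_zero]
  have hXY : PowerSeries.C mu * expSeries 1 * (PowerSeries.C mu⁻¹ * expSeries (-1)) = 1 := by
    rw [mul_mul_mul_comm, hC, hE, one_mul]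
  -- The base is `μ⁻¹ e^{-t} (μ e^t + 1)^2`, so only a binomial expansion of exponent `2k` is needed.
  have hbase : PowerSeries.C mu * expSeries 1 + PowerSeries.C mu⁻¹ * expSeries (-1) + 2 =
      PowerSeries.C mu⁻¹ * expSeries (-1) * (PowerSeries.C mu * expSeries 1 + 1) ^ 2 := by
    linear_combination (-(PowerSeries.C mu * expSeries 1) - 2) * hXY
  have hterm : ∀ j, (PowerSeries.C mu⁻¹ * expSeries (-1)) ^ k *
      ((PowerSeries.C mu * expSeries 1) ^ j * 1 ^ (2 * k - j) * ((2 * k).choose j : PowerSeries ℂ))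
      = PowerSeries.C (((2 * k).choose j : ℂ) * mu ^ ((j : ℤ) - k)) * expSeries ((j : ℂ) - k) := by
    intro j
    have hz : mu ^ ((j : ℤ) - k) = mu ^ j * mu⁻¹ ^ k := by
      rw [zpow_sub₀ hmu, zpow_natCast, zpow_natCast, inv_pow, div_eq_mul_inv]
    have he : expSeries ((j : ℂ) - k) = expSeries j * expSeries (k * -1) := by
      rw [expSeries_mul]; ring_nf
    rw [hz, he]
    simp only [mul_pow, expSeries_pow, map_mul, map_pow, map_natCast, mul_one, one_pow]
    ring
  rw [hbase, mul_pow, ← pow_mul, add_pow, mul_sum, map_sum]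
  simp only [hterm, coeff_C_mul_expSeries]
  have hk : ((2 * k).factorial : ℂ) ≠ 0 := by exact_mod_cast (2 * k).factorial_ne_zero
  rw [y2, ← mul_assoc, mul_one_div_cancel hk, one_mul, sum_div]

theorem y2_neg_eq_stirling2_conv (n k : ℕ) (lam : ℂ) (hlam : lam ≠ 0) :
    y2 n k (-lam) =
      ((k.factorial : ℂ) / ((2 * k).factorial : ℂ)) *
        ∑ j ∈ range (k + 1), ∑ d ∈ range (n + 1),
          (-1 : ℂ) ^ (k + n - d) * (n.choose d : ℂ) *
            stirling2 d j lam * stirling2 (n - d) (k - j) lam⁻¹ := by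
  have hk : ((2 * k).factorial : ℂ) ≠ 0 := by exact_mod_cast (2 * k).factorial_ne_zero
  have hf : ∀ m : ℕ, (m.factorial : ℂ) ≠ 0 := fun m => by exact_mod_cast m.factorial_ne_zero
  have hY := coeff_y2 n k (-lam) (neg_ne_zero.mpr hlam)
  have hbase : PowerSeries.C (-lam) * expSeries 1 + PowerSeries.C (-lam)⁻¹ * expSeries (-1) + 2 =
      PowerSeries.C (-1) * ((PowerSeries.C lam * expSeries 1 - 1) +
        (PowerSeries.C lam⁻¹ * expSeries (-1) - 1)) := by
    rw [inv_neg]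
    simp only [map_neg, map_one]
    ring
  rw [hbase, mul_pow, ← map_pow, PowerSeries.coeff_C_mul, add_pow, map_sum] at hY
  have hy : y2 n k (-lam) = n.factorial / (2 * k).factorial *
      ((2 * k).factorial * y2 n k (-lam) / n.factorial) := by
    field_simp [hf n, hk]
  rw [hy, ← hY]
  simp only [mul_sum]
  refine sum_congr rfl fun j hj => ?_
  have hjk : j ≤ k := Nat.lt_succ_iff.mp (mem_range.mp hj)
  rw [← map_natCast (PowerSeries.C (R := ℂ)), PowerSeries.coeff_mul_C, PowerSeries.coeff_mul,
    Nat.sum_antidiagonal_eq_sum_range_succ_mk]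
  simp only [mul_sum, sum_mul]
  refine sum_congr rfl fun d hd => ?_
  have hdn : d ≤ n := Nat.lt_succ_iff.mp (mem_range.mp hd)
  rw [coeff_stirling2, coeff_stirling2_neg, Nat.add_sub_assoc hdn, pow_add,
    Nat.cast_choose ℂ hjk, Nat.cast_choose ℂ hdn]
  have h1 := hf j
  have h2 := hf (k - j)
  have h3 := hf d
  have h4 := hf (n - d)
  have h5 := hf n
  field_simp
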